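/- Let 1 < p < ∞, α ≥ 0 and 0 < a < ∞. Then there exists a constant C > 0 such that ∫_0^a f(t) t^{1/p − 1} dt ≤ C (∫_0^a f(t)^p (1 + log(a/t))^{α p} dt)^{1/p} holds for every nonnegative decreasing measurable function f on (0, a) if and only if α > 1 − 1/p. (Equivalently, the Zygmund space L^p(log L)^α(E) embeds continuously into the Lorentz space L^{p,1}(E) for a measurable set E of finite positive measure if and only if α > 1 − 1/p.) -/

import Mathlib

/-!
Write `q` for the conjugate exponent of `p` and `w t = 1 + log (a / t)`.

If `α > 1 - 1/p`, Hölder's inequality for `f t * t ^ (1/p - 1) = (f w ^ α) (t ^ (1/p - 1) w ^ (-α))`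
leaves the constant `(∫ t⁻¹ w ^ (-α q) dt) ^ (1/q)`. The substitution `s = w t` turns this into
`∫_1^∞ s ^ (-α q) ds`, finite because `α q > 1`.

If `α ≤ 1 - 1/p`, a single function refutes the inequality for every `C`. With
`L t = 2 p + log (a / t)`, put `f t = t ^ (-1/p) / (L (1 + log L))`. The shift `2 p` makes `f`
decreasing up to the endpoint `a` (`testFun_antitone_aux`). The substitutions `s = L t` and
`v = 1 + log s` turn the left side into `∫ v⁻¹ dv = ∞`, and bound the `p`-th power of the right side
by `∫ v ^ (-p) dv < ∞`, since `w ^ (α p) ≤ L ^ (p - 1)`.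
-/

open MeasureTheory Set ENNReal

/-- The substitution `s = K + log (a / t)`. -/
lemma lintegral_inv_mul_comp_log_div (a K : ℝ) (ha : 0 < a) (g : ℝ → ℝ) :
    ∫⁻ t in Ioo (0 : ℝ) a, ENNReal.ofReal (t⁻¹ * g (K + Real.log (a / t))) =
      ∫⁻ s in Ioi K, ENNReal.ofReal (g s) := by
  have himg : (fun s : ℝ => a * Real.exp (K - s)) '' Ioi K = Ioo 0 a := by
    ext t
    constructor
    · rintro ⟨s, hs, rfl⟩
      have hs' : K < s := hs
      refine ⟨by positivity, ?_⟩
      have : Real.exp (K - s) < 1 := by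
        rw [Real.exp_lt_one_iff]; linarith
      simpa using mul_lt_mul_of_pos_left this ha
    · rintro ⟨h0, h1⟩
      refine ⟨K + Real.log (a / t), ?_, ?_⟩
      · have : 0 < Real.log (a / t) := Real.log_pos ((one_lt_div h0).2 h1)
        simpa using this
      · have : K - (K + Real.log (a / t)) = Real.log (t / a) := by
          rw [Real.log_div ha.ne' h0.ne', Real.log_div h0.ne' ha.ne']; ring
        simp only [this]
        rw [Real.exp_log (by positivity)]
        field_simp
  rw [← himg, lintegral_image_eq_lintegral_abs_deriv_mul measurableSet_Ioi
    (f' := fun s => -(a * Real.exp (K - s)))]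
  · refine setLIntegral_congr_fun measurableSet_Ioi fun s _ => ?_
    have h1 : K + Real.log (a / (a * Real.exp (K - s))) = s := by
      rw [Real.log_div ha.ne' (by positivity), Real.log_mul ha.ne' (by positivity), Real.log_exp]
      ring
    simp only [h1]
    rw [← ENNReal.ofReal_mul (abs_nonneg _), abs_neg, abs_of_pos (by positivity)]
    congr 1
    field_simp
  · intro s _
    have := (((hasDerivAt_id s).const_sub K).exp).const_mul a
    simpa using this.hasDerivWithinAt
  · intro x _ y _ hxy
    have := Real.exp_injective (mul_left_cancel₀ ha.ne' hxy)
    linarith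

/-- The substitution `v = 1 + log s`. -/
lemma lintegral_inv_mul_comp_one_add_log (K : ℝ) (hK : 0 < K) (g : ℝ → ℝ) :
    ∫⁻ s in Ioi K, ENNReal.ofReal (s⁻¹ * g (1 + Real.log s)) =
      ∫⁻ v in Ioi (1 + Real.log K), ENNReal.ofReal (g v) := by
  have himg : (fun v : ℝ => Real.exp (v - 1)) '' Ioi (1 + Real.log K) = Ioi K := by
    ext s
    constructor
    · rintro ⟨v, hv, rfl⟩
      have hv' : 1 + Real.log K < v := hv
      exact (Real.log_lt_iff_lt_exp hK).1 (by linarith)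
    · intro hs
      have hs' : K < s := hs
      refine ⟨1 + Real.log s, ?_, ?_⟩
      · have := Real.log_lt_log hK hs'
        simpa using this
      · simp [Real.exp_log (hK.trans hs')]
  rw [← himg, lintegral_image_eq_lintegral_abs_deriv_mul measurableSet_Ioi
    (f' := fun v => Real.exp (v - 1))]
  · refine setLIntegral_congr_fun measurableSet_Ioi fun v _ => ?_
    have h1 : 1 + Real.log (Real.exp (v - 1)) = v := by
      rw [Real.log_exp]; ring
    simp only [h1]
    rw [← ENNReal.ofReal_mul (abs_nonneg _), abs_of_pos (by positivity)]
    congr 1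
    field_simp
  · intro v _
    have := ((hasDerivAt_id v).sub_const 1).exp
    simpa using this.hasDerivWithinAt
  · intro x _ y _ hxy
    have := Real.exp_injective hxy
    linarith

lemma lintegral_Ioi_inv_eq_top (c : ℝ) (hc : 0 < c) :
    ∫⁻ v in Ioi c, ENNReal.ofReal (v⁻¹) = ⊤ := by
  by_contra h
  refine not_integrableOn_Ioi_inv (a := c) ?_
  refine ⟨by fun_prop, ?_⟩
  rw [hasFiniteIntegral_iff_ofReal]
  · exact lt_top_iff_ne_top.2 h
  · filter_upwards [ae_restrict_mem measurableSet_Ioi] with v hv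
    exact inv_nonneg.2 (hc.trans hv).le

lemma lintegral_Ioi_rpow_lt_top (c r : ℝ) (hc : 0 < c) (hr : r < -1) :
    ∫⁻ v in Ioi c, ENNReal.ofReal (v ^ r) < ⊤ :=
  (integrableOn_Ioi_rpow_of_lt hr hc).lintegral_lt_top

/-- In the variable `L`, decrease of the test function says that `L (1 + log L) e ^ (-L/p)` is
antitone for `L ≥ 2 p`. Both `L₂ / L₁` and `(1 + log L₂) / (1 + log L₁)` are at most
`exp ((L₂ - L₁) / (2 p))`. -/
lemma testFun_antitone_aux (p x y : ℝ) (hp : 1 < p) (hx : 2 * p ≤ x) (hxy : x ≤ y) :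
    y * (1 + Real.log y) ≤ Real.exp ((y - x) / p) * (x * (1 + Real.log x)) := by
  have hx0 : 0 < x := by linarith
  have hy0 : 0 < y := by linarith
  have hlx : 0 ≤ Real.log x := Real.log_nonneg (by linarith)
  have hly : 0 ≤ Real.log y := Real.log_nonneg (by linarith)
  set E := Real.exp ((y - x) / (2 * p)) with hE
  have hEE : Real.exp ((y - x) / p) = E * E := by
    rw [hE, ← Real.exp_add]; congr 1; field_simp; ring
  have h1 : y / x ≤ E := by
    have h2 : (y - x) / (2 * p) + 1 ≤ E := Real.add_one_le_exp _
    have h3 : (y - x) / x ≤ (y - x) / (2 * p) :=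
      div_le_div_of_nonneg_left (by linarith) (by linarith) hx
    have h4 : y / x = (y - x) / x + 1 := by field_simp; ring
    linarith
  have h5 : y ≤ E * x := (div_le_iff₀ hx0).1 h1
  have h6 : 1 + Real.log y ≤ E * (1 + Real.log x) := by
    have h7 : Real.log y - Real.log x ≤ y / x - 1 := by
      rw [← Real.log_div hy0.ne' hx0.ne']
      exact Real.log_le_sub_one_of_pos (by positivity)
    have h8 : 1 ≤ E := Real.one_le_exp (div_nonneg (by linarith) (by linarith))
    nlinarith [mul_nonneg (sub_nonneg.2 h8) hlx]
  calc y * (1 + Real.log y) ≤ (E * x) * (E * (1 + Real.log x)) :=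
        mul_le_mul h5 h6 (by linarith) (by positivity)
    _ = _ := by rw [hEE]; ring

/-- The extremal function `t ^ (-1/p) / (L (1 + log L))` with `L = 2 p + log (a / t)`. -/
noncomputable def testFun (p a t : ℝ) : ℝ :=
  t ^ (-(1 / p)) *
    ((2 * p + Real.log (a / t)) * (1 + Real.log (2 * p + Real.log (a / t))))⁻¹

lemma testFun_antitoneOn (p a : ℝ) (hp : 1 < p) (ha : 0 < a) :
    AntitoneOn (testFun p a) (Ioo 0 a) := by
  intro t ht u hu htu
  have ht0 := ht.1
  have hu0 := hu.1
  unfold testFun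
  have hlu : 0 < Real.log (a / u) := Real.log_pos ((one_lt_div hu.1).2 hu.2)
  have hlut : Real.log (a / u) ≤ Real.log (a / t) :=
    Real.log_le_log (by positivity) (div_le_div_of_nonneg_left ha.le ht0 htu)
  have key := testFun_antitone_aux p (2 * p + Real.log (a / u)) (2 * p + Real.log (a / t)) hp
    (by linarith) (by linarith)
  set x := 2 * p + Real.log (a / u) with hx
  set y := 2 * p + Real.log (a / t) with hy
  have hlx : 0 ≤ Real.log x := Real.log_nonneg (by linarith)
  have hly : 0 ≤ Real.log y := Real.log_nonneg (by linarith)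
  have hX : 0 < x * (1 + Real.log x) := mul_pos (by linarith) (by linarith)
  have hY : 0 < y * (1 + Real.log y) := mul_pos (by linarith) (by linarith)
  have hyx : y - x = Real.log u - Real.log t := by
    rw [hx, hy, Real.log_div ha.ne' hu0.ne', Real.log_div ha.ne' ht0.ne']; ring
  have hexp : u ^ (-(1 / p)) * Real.exp ((y - x) / p) = t ^ (-(1 / p)) := by
    rw [Real.rpow_def_of_pos hu0, Real.rpow_def_of_pos ht0, ← Real.exp_add, hyx]
    congr 1; ring
  rw [← div_eq_mul_inv, ← div_eq_mul_inv, div_le_div_iff₀ hX hY, ← hexp]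
  have := mul_le_mul_of_nonneg_left key (Real.rpow_nonneg hu0.le (-(1 / p)))
  linarith

lemma testFun_measurable (p a : ℝ) : Measurable (testFun p a) := by
  unfold testFun
  fun_prop

lemma lintegral_testFun_lorentz (p a : ℝ) (hp : 1 < p) (ha : 0 < a) :
    ∫⁻ t in Ioo (0 : ℝ) a, ENNReal.ofReal (testFun p a t) * ENNReal.ofReal (t ^ (1 / p - 1)) =
      ⊤ := by
  have hl : 0 < Real.log (2 * p) := Real.log_pos (by linarith)
  rw [← lintegral_Ioi_inv_eq_top (1 + Real.log (2 * p)) (by linarith),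
    ← lintegral_inv_mul_comp_one_add_log (2 * p) (by linarith),
    ← lintegral_inv_mul_comp_log_div a (2 * p) ha (fun s => s⁻¹ * (1 + Real.log s)⁻¹)]
  refine setLIntegral_congr_fun measurableSet_Ioo fun t ht => ?_
  have ht0 : 0 < t := ht.1
  simp only [testFun]
  rw [← ENNReal.ofReal_mul' (by positivity), mul_right_comm, ← Real.rpow_add ht0,
    show -(1 / p) + (1 / p - 1) = -1 by ring, Real.rpow_neg_one, mul_inv]

lemma lintegral_testFun_zygmund (p α a : ℝ) (hp : 1 < p) (ha : 0 < a) (hα : α ≤ 1 - 1 / p) :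
    ∫⁻ t in Ioo (0 : ℝ) a, ENNReal.ofReal (testFun p a t) ^ p *
      ENNReal.ofReal ((1 + Real.log (a / t)) ^ (α * p)) < ⊤ := by
  have hl : 0 < Real.log (2 * p) := Real.log_pos (by linarith)
  refine lt_of_le_of_lt ?_
    (lintegral_Ioi_rpow_lt_top (1 + Real.log (2 * p)) (-p) (by linarith) (by linarith))
  rw [← lintegral_inv_mul_comp_one_add_log (2 * p) (by linarith) (fun v => v ^ (-p)),
    ← lintegral_inv_mul_comp_log_div a (2 * p) ha (fun s => s⁻¹ * (1 + Real.log s) ^ (-p))]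
  refine setLIntegral_mono' measurableSet_Ioo fun t ht => ?_
  have ht0 : 0 < t := ht.1
  have hlt : 0 < Real.log (a / t) := Real.log_pos ((one_lt_div ht.1).2 ht.2)
  simp only [testFun]
  set w := 1 + Real.log (a / t) with hw
  set y := 2 * p + Real.log (a / t) with hy
  have hy0 : 0 < y := by linarith
  have hw1 : 1 ≤ w := by linarith
  have hly : 0 < 1 + Real.log y := by
    have := Real.log_nonneg (show 1 ≤ y by linarith)
    linarith
  have hαp : α * p ≤ p - 1 := by
    have := mul_le_mul_of_nonneg_right hα (show 0 ≤ p by linarith)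
    rwa [sub_mul, one_mul, one_div, inv_mul_cancel₀ (by linarith)] at this
  have hwy : w ^ (α * p) ≤ y ^ (p - 1) :=
    (Real.rpow_le_rpow_of_exponent_le hw1 hαp).trans
      (Real.rpow_le_rpow (by linarith) (by linarith) (by linarith))
  rw [ENNReal.ofReal_rpow_of_nonneg (by positivity) (by linarith),
    ← ENNReal.ofReal_mul (by positivity)]
  refine ENNReal.ofReal_le_ofReal ?_
  have e1 : (t ^ (-(1 / p)) * (y * (1 + Real.log y))⁻¹) ^ p =
      t⁻¹ * (y ^ (-p) * (1 + Real.log y) ^ (-p)) := by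
    rw [Real.mul_rpow (by positivity) (by positivity), ← Real.rpow_mul ht0.le,
      Real.inv_rpow (by positivity), Real.mul_rpow hy0.le hly.le, mul_inv,
      ← Real.rpow_neg hy0.le, ← Real.rpow_neg hly.le,
      show -(1 / p) * p = -1 by field_simp, Real.rpow_neg_one]
  have e2 : y⁻¹ = y ^ (-p) * y ^ (p - 1) := by
    rw [← Real.rpow_add hy0, show -p + (p - 1) = -1 by ring, Real.rpow_neg_one]
  rw [e1, e2]
  calc _ ≤ t⁻¹ * (y ^ (-p) * (1 + Real.log y) ^ (-p)) * y ^ (p - 1) :=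
        mul_le_mul_of_nonneg_left hwy (by positivity)
    _ = _ := by ring

lemma hardy_of_lt (p α a : ℝ) (hp : 1 < p) (ha : 0 < a) (hα : 1 - 1 / p < α) :
    ∃ C : ℝ, 0 < C ∧ ∀ f : ℝ → ℝ≥0∞, Measurable f →
        ∫⁻ t in Set.Ioo (0 : ℝ) a, f t * ENNReal.ofReal (t ^ (1 / p - 1)) ≤
          ENNReal.ofReal C *
            (∫⁻ t in Set.Ioo (0 : ℝ) a,
              f t ^ p * ENNReal.ofReal ((1 + Real.log (a / t)) ^ (α * p))) ^ (1 / p) := by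
  have hpq := Real.HolderConjugate.conjExponent hp
  set q := Real.conjExponent p with hq
  have hq0 : 0 < q := hpq.symm.pos
  have hpq1 : 1 / p - 1 = -(1 / q) := by
    have := hpq.inv_add_inv_eq_one
    rw [one_div, one_div]; linarith
  have hαq : -(α * q) < -1 := by
    have : 1 / q < α := by linarith
    rw [div_lt_iff₀ hq0] at this
    linarith
  set g : ℝ → ℝ≥0∞ :=
    fun t => ENNReal.ofReal (t ^ (1 / p - 1) * (1 + Real.log (a / t)) ^ (-α)) with hg
  have hgm : Measurable g := by rw [hg]; fun_prop
  have hgint : ∫⁻ t in Ioo (0 : ℝ) a, g t ^ q < ⊤ := by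
    refine lt_of_eq_of_lt ?_ (lintegral_Ioi_rpow_lt_top 1 (-(α * q)) one_pos hαq)
    rw [← lintegral_inv_mul_comp_log_div a 1 ha (fun s => s ^ (-(α * q)))]
    refine setLIntegral_congr_fun measurableSet_Ioo fun t ht => ?_
    have ht0 : 0 < t := ht.1
    have hlt : 0 < Real.log (a / t) := Real.log_pos ((one_lt_div ht.1).2 ht.2)
    simp only [hg]
    rw [ENNReal.ofReal_rpow_of_nonneg (by positivity) hq0.le,
      Real.mul_rpow (by positivity) (by positivity), ← Real.rpow_mul ht0.le,
      ← Real.rpow_mul (by positivity), hpq1, show -(1 / q) * q = -1 by field_simp,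
      Real.rpow_neg_one, neg_mul]
  set I := (∫⁻ t in Ioo (0 : ℝ) a, g t ^ q) ^ (1 / q) with hI
  have hItop : I ≠ ⊤ := ENNReal.rpow_ne_top_of_nonneg (by positivity) hgint.ne
  refine ⟨I.toReal + 1, by positivity, fun f hf => ?_⟩
  have hIC : I ≤ ENNReal.ofReal (I.toReal + 1) := by
    rw [← ENNReal.ofReal_toReal hItop]
    exact ENNReal.ofReal_le_ofReal (by rw [ENNReal.toReal_ofReal (by positivity)]; linarith)
  set F : ℝ → ℝ≥0∞ := fun t => f t * ENNReal.ofReal ((1 + Real.log (a / t)) ^ α) with hF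
  have hFm : Measurable F := by rw [hF]; fun_prop
  have holder := ENNReal.lintegral_mul_le_Lp_mul_Lq (volume.restrict (Ioo (0 : ℝ) a)) hpq
    hFm.aemeasurable hgm.aemeasurable
  have e1 : ∫⁻ t in Ioo (0 : ℝ) a, (F * g) t =
      ∫⁻ t in Ioo (0 : ℝ) a, f t * ENNReal.ofReal (t ^ (1 / p - 1)) := by
    refine setLIntegral_congr_fun measurableSet_Ioo fun t ht => ?_
    have ht0 : 0 < t := ht.1
    have hlt : 0 < Real.log (a / t) := Real.log_pos ((one_lt_div ht.1).2 ht.2)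
    simp only [hF, hg, Pi.mul_apply]
    rw [mul_assoc, ← ENNReal.ofReal_mul (by positivity), mul_left_comm,
      ← Real.rpow_add (by positivity), add_neg_cancel, Real.rpow_zero, mul_one]
  have e2 : ∫⁻ t in Ioo (0 : ℝ) a, F t ^ p =
      ∫⁻ t in Ioo (0 : ℝ) a,
        f t ^ p * ENNReal.ofReal ((1 + Real.log (a / t)) ^ (α * p)) := by
    refine setLIntegral_congr_fun measurableSet_Ioo fun t ht => ?_
    have hlt : 0 < Real.log (a / t) := Real.log_pos ((one_lt_div ht.1).2 ht.2)
    simp only [hF]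
    rw [ENNReal.mul_rpow_of_nonneg _ _ (by linarith),
      ENNReal.ofReal_rpow_of_nonneg (by positivity) (by linarith), ← Real.rpow_mul (by positivity)]
  rw [e1, e2, ← hI, mul_comm] at holder
  exact holder.trans (mul_le_mul_left hIC _)

/-- For `1 < p < ∞`, `α ≥ 0` and `0 < a < ∞`, the Hardy-type inequality
`∫_0^a f(t) t^{1/p-1} dt ≤ C (∫_0^a f(t)^p (1+log(a/t))^{αp} dt)^{1/p}` holds (with a
constant `C` independent of `f`) for every nonnegative decreasing measurable `f` on `(0,a)`
if and only if `α > 1 - 1/p`; equivalently, `L^p(log L)^α(E)` embeds into `L^{p,1}(E)`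
if and only if `α > 1 - 1/p`. -/
theorem zygmund_embeds_into_lorentz_iff (p α a : ℝ) (hp : 1 < p) (hα : 0 ≤ α) (ha : 0 < a) :
    (∃ C : ℝ, 0 < C ∧ ∀ f : ℝ → ℝ≥0∞, Measurable f → AntitoneOn f (Set.Ioo 0 a) →
        ∫⁻ t in Set.Ioo (0 : ℝ) a, f t * ENNReal.ofReal (t ^ (1 / p - 1)) ≤
          ENNReal.ofReal C *
            (∫⁻ t in Set.Ioo (0 : ℝ) a,
              f t ^ p * ENNReal.ofReal ((1 + Real.log (a / t)) ^ (α * p))) ^ (1 / p)) ↔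
      1 - 1 / p < α := by
  constructor
  · rintro ⟨C, -, h⟩
    by_contra hle
    have hbad := h (fun t => ENNReal.ofReal (testFun p a t))
      (testFun_measurable p a).ennreal_ofReal
      (fun t ht u hu htu => ENNReal.ofReal_le_ofReal (testFun_antitoneOn p a hp ha ht hu htu))
    rw [lintegral_testFun_lorentz p a hp ha, top_le_iff] at hbad
    refine ENNReal.mul_ne_top ENNReal.ofReal_ne_top ?_ hbad
    exact ENNReal.rpow_ne_top_of_nonneg (by positivity)
      (lintegral_testFun_zygmund p α a hp ha (not_lt.1 hle)).ne
  · intro h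
    obtain ⟨C, hC, hf⟩ := hardy_of_lt p α a hp ha h
    exact ⟨C, hC, fun f hm _ => hf f hm⟩
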